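/- Let n ≥ 3 and let x_1, …, x_n be distinct real numbers. For every ε > 0 there exists M > 0 such that for every θ ∈ ℍ with |Re θ| > M, or Im θ > M, or Im θ < 1/M, one has L(θ) < ε. Consequently, the Cauchy likelihood L attains its maximum over ℍ: there exists θ₀ ∈ ℍ with L(θ) ≤ L(θ₀) for all θ ∈ ℍ. -/

import Mathlib

open Complex Finset

/-- The Cauchy likelihood of the sample `x` at parameter `θ = μ + iσ`. -/
noncomputable def cauchyL {n : ℕ} (x : Fin n → ℝ) (θ : ℂ) : ℝ :=
  ∏ j, (θ.im / Real.pi) / ((x j - θ.re) ^ 2 + θ.im ^ 2)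

/-!
Near a boundary point of the half-plane only the observations with one common value `v` can have
a large density, of order `1 / Im θ`, while every other observation has density of order at most
`Im θ`. If fewer than half of the observations equal `v`, the large factors are therefore
compensated by as many small ones, and at least one further density is left over. So `L` is at
most a constant times the density at an observation bounded away from `Re θ`, which tends to `0`
at the boundary and at infinity.
-/

open Filter Topology

theorem exists_pos_forall_lt_dist_of_ne {ι X : Type*} [Finite ι] [MetricSpace X] (x : ι → X) :
    ∃ r : ℝ, 0 < r ∧ ∀ i j, x i ≠ x j → r < dist (x i) (x j) := by
  have eventually_lt_dist : ∀ᶠ r : ℝ in 𝓝[>] 0, ∀ i j, x i ≠ x j → r < dist (x i) (x j) := by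
    simp only [eventually_all]
    exact fun i j hij ↦ (eventually_lt_nhds (dist_pos.2 hij)).filter_mono nhdsWithin_le_nhds
  exact (eventually_mem_nhdsWithin.and eventually_lt_dist).exists

theorem two_mul_card_fiber_lt_of_injective {n : ℕ} {α : Type*} [DecidableEq α] {x : Fin n → α}
    (hn : 3 ≤ n) (hx : Function.Injective x) (v : α) : 2 * #{j | x j = v} < n := by
  have card_le_one : #{j | x j = v} ≤ 1 := Finset.card_le_one.2 fun i hi j hj ↦
    hx (((mem_filter_univ i).1 hi).trans ((mem_filter_univ j).1 hj).symm)
  omega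

theorem exists_notMem_prod_le_of_two_mul_card_lt {ι R : Type*} [Fintype ι] [Field R]
    [LinearOrder R] [IsStrictOrderedRing R] {q : ι → R} {A : Finset ι} {u : R} (hu : 0 < u)
    (hA : 2 * #A < Fintype.card ι) (hq : ∀ j, 0 ≤ q j)
    (hq_mem : ∀ j ∈ A, q j ≤ u⁻¹) (hq_notMem : ∀ j ∉ A, q j ≤ min u 1) :
    ∃ k ∉ A, ∏ j, q j ≤ q k := by
  classical
  obtain ⟨k, hk⟩ : ∃ k, k ∉ A := by
    by_contra! h
    rw [eq_univ_iff_forall.2 h, card_univ] at hA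
    omega
  have hkA : k ∈ Aᶜ := mem_compl.2 hk
  have card_le : #A ≤ #(Aᶜ.erase k) := by
    rw [card_erase_of_mem hkA, card_compl]
    omega
  have prod_mem_le : ∏ j ∈ A, q j ≤ (u⁻¹) ^ #A :=
    (prod_le_prod (fun j _ ↦ hq j) hq_mem).trans_eq (prod_const _)
  have prod_notMem_le : ∏ j ∈ Aᶜ.erase k, q j ≤ u ^ #A :=
    calc ∏ j ∈ Aᶜ.erase k, q j
      _ ≤ ∏ _j ∈ Aᶜ.erase k, min u 1 := prod_le_prod (fun j _ ↦ hq j) fun j hj ↦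
          hq_notMem j (mem_compl.1 (mem_of_mem_erase hj))
      _ = min u 1 ^ #(Aᶜ.erase k) := prod_const _
      _ ≤ min u 1 ^ #A := pow_le_pow_of_le_one (by positivity) (min_le_right u 1) card_le
      _ ≤ u ^ #A := by gcongr; exact min_le_left u 1
  refine ⟨k, hk, ?_⟩
  calc ∏ j, q j
    _ = q k * ((∏ j ∈ A, q j) * ∏ j ∈ Aᶜ.erase k, q j) := by
        rw [← prod_mul_prod_compl A, ← mul_prod_erase _ q hkA]
        ring
    _ ≤ q k * ((u⁻¹) ^ #A * u ^ #A) := by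
        gcongr
        exacts [hq k, prod_nonneg fun j _ ↦ hq j]
    _ = q k := by rw [← mul_pow, inv_mul_cancel₀ hu.ne', one_pow, mul_one]

theorem exists_forall_le_of_forall_notMem_isCompact_lt {X α : Type*} [TopologicalSpace X]
    [LinearOrder α] [TopologicalSpace α] [ClosedIciTopology α] {f : X → α} {U K : Set X} {a : X}
    (hK : IsCompact K) (hf : ContinuousOn f K) (ha : a ∈ U)
    (hlt : ∀ y ∈ U, y ∉ K → f y < f a) : ∃ y ∈ K, ∀ z ∈ U, f z ≤ f y := by
  have haK : a ∈ K := by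
    by_contra h
    exact (hlt a ha h).false
  obtain ⟨y, hy, hmax⟩ := hK.exists_isMaxOn ⟨a, haK⟩ hf
  refine ⟨y, hy, fun z hz ↦ ?_⟩
  by_cases hzK : z ∈ K
  · exact hmax hzK
  · exact (hlt z hz hzK).le.trans (hmax haK)

/-- The compact boxes exhausting the upper half-plane; `halfPlaneBox M` is the set of `θ` with
`|Re θ| ≤ M` and `1 / M ≤ Im θ ≤ M`. -/
def halfPlaneBox (M : ℝ) : Set ℂ :=
  Set.Icc (-M) M ×ℂ Set.Icc (1 / M) M

theorem isCompact_halfPlaneBox (M : ℝ) : IsCompact (halfPlaneBox M) :=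
  isCompact_Icc.reProdIm isCompact_Icc

theorem notMem_halfPlaneBox_iff {M : ℝ} {θ : ℂ} :
    θ ∉ halfPlaneBox M ↔ M < |θ.re| ∨ M < θ.im ∨ θ.im < 1 / M := by
  simp only [halfPlaneBox, mem_reProdIm, Set.mem_Icc, ← abs_le, not_and_or, not_le,
    or_comm (a := θ.im < 1 / M)]

theorem im_pos_of_mem_halfPlaneBox {M : ℝ} {θ : ℂ} (hM : 0 < M) (hθ : θ ∈ halfPlaneBox M) :
    0 < θ.im :=
  (one_div_pos.2 hM).trans_le hθ.2.1

/-- The density at `t` of the Cauchy distribution with location `Re θ` and scale `Im θ`; these are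
the factors of `cauchyL`. -/
noncomputable def cauchyDensity (t : ℝ) (θ : ℂ) : ℝ :=
  (θ.im / Real.pi) / ((t - θ.re) ^ 2 + θ.im ^ 2)

section cauchyDensity

variable {t : ℝ} {θ : ℂ}

theorem cauchyDensity_pos (hθ : 0 < θ.im) : 0 < cauchyDensity t θ := by
  unfold cauchyDensity
  positivity

theorem cauchyDensity_le_im_div (hθ : 0 < θ.im) :
    cauchyDensity t θ ≤ θ.im / ((t - θ.re) ^ 2 + θ.im ^ 2) := by
  unfold cauchyDensity
  gcongr
  exact div_le_self hθ.le (by linarith [Real.pi_gt_three])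

theorem im_mul_cauchyDensity_le_one (hθ : 0 < θ.im) : θ.im * cauchyDensity t θ ≤ 1 :=
  calc θ.im * cauchyDensity t θ
    _ ≤ θ.im * (θ.im / ((t - θ.re) ^ 2 + θ.im ^ 2)) := by grw [cauchyDensity_le_im_div hθ]
    _ ≤ 1 := by
        rw [← mul_div_assoc]
        exact div_le_one_of_le₀ (by linarith [sq_nonneg (t - θ.re)]) (by positivity)

theorem abs_sub_re_mul_cauchyDensity_le_one (hθ : 0 < θ.im) :
    |t - θ.re| * cauchyDensity t θ ≤ 1 :=
  calc |t - θ.re| * cauchyDensity t θ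
    _ ≤ |t - θ.re| * (θ.im / ((t - θ.re) ^ 2 + θ.im ^ 2)) := by
        grw [cauchyDensity_le_im_div hθ]
    _ ≤ 1 := by
        rw [← mul_div_assoc, ← sq_abs (t - θ.re)]
        refine div_le_one_of_le₀ ?_ (by positivity)
        nlinarith [two_mul_le_add_sq |t - θ.re| θ.im, abs_nonneg (t - θ.re)]

theorem sq_sub_re_mul_cauchyDensity_le_im (hθ : 0 < θ.im) :
    (t - θ.re) ^ 2 * cauchyDensity t θ ≤ θ.im :=
  calc (t - θ.re) ^ 2 * cauchyDensity t θ
    _ ≤ (t - θ.re) ^ 2 * (θ.im / ((t - θ.re) ^ 2 + θ.im ^ 2)) := by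
        grw [cauchyDensity_le_im_div hθ]
    _ ≤ θ.im := by
        rw [← mul_div_assoc, div_le_iff₀ (by positivity), mul_comm]
        gcongr
        linarith [sq_nonneg θ.im]

theorem sq_mul_cauchyDensity_le_im {d : ℝ} (hd : 0 ≤ d) (hθ : 0 < θ.im) (ht : d ≤ |t - θ.re|) :
    d ^ 2 * cauchyDensity t θ ≤ θ.im :=
  calc d ^ 2 * cauchyDensity t θ
    _ ≤ |t - θ.re| ^ 2 * cauchyDensity t θ := by
        gcongr
        exact (cauchyDensity_pos hθ).le
    _ ≤ θ.im := by
        rw [sq_abs]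
        exact sq_sub_re_mul_cauchyDensity_le_im hθ

theorem mul_cauchyDensity_le_inv {d : ℝ} (hd : 0 ≤ d) (hθ : 0 < θ.im) :
    d * cauchyDensity t θ ≤ (θ.im / d)⁻¹ := by
  rw [inv_div, le_div_iff₀ hθ, mul_assoc, mul_comm _ θ.im]
  exact mul_le_of_le_one_right hd (im_mul_cauchyDensity_le_one hθ)

theorem mul_cauchyDensity_le_min {d : ℝ} (hd : 0 < d) (hθ : 0 < θ.im) (ht : d ≤ |t - θ.re|) :
    d * cauchyDensity t θ ≤ min (θ.im / d) 1 := by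
  refine le_min ?_ ?_
  · rw [le_div_iff₀' hd, ← mul_assoc, ← sq]
    exact sq_mul_cauchyDensity_le_im hd.le hθ ht
  · have density_nonneg : 0 ≤ cauchyDensity t θ := (cauchyDensity_pos hθ).le
    grw [ht]
    exact abs_sub_re_mul_cauchyDensity_le_one hθ

theorem eventually_cauchyDensity_lt (t : ℝ) {d ε : ℝ} (hd : 0 < d) (hε : 0 < ε) :
    ∀ᶠ M in atTop, ∀ θ : ℂ, 0 < θ.im → d ≤ |t - θ.re| → θ ∉ halfPlaneBox M →
      cauchyDensity t θ < ε := by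
  filter_upwards [eventually_ge_atTop (|t| + ε⁻¹), eventually_ge_atTop (d ^ 2 * ε)⁻¹]
    with M hM_inv hM_sq θ hθ ht hbox
  have lt_of_inv_lt {c b : ℝ} (hcb : c * b ≤ 1) (hc : ε⁻¹ < c) : b < ε := by
    have hc_pos : 0 < c := (inv_pos.2 hε).trans hc
    calc b
      _ ≤ c⁻¹ := by rwa [← one_div, le_div_iff₀' hc_pos]
      _ < ε := inv_lt_of_inv_lt₀ hε hc
  rcases notMem_halfPlaneBox_iff.1 hbox with hre | him | him
  · refine lt_of_inv_lt (abs_sub_re_mul_cauchyDensity_le_one hθ) ?_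
    linarith [abs_sub_abs_le_abs_sub θ.re t, abs_sub_comm θ.re t]
  · exact lt_of_inv_lt (im_mul_cauchyDensity_le_one hθ) (by linarith [abs_nonneg t])
  · refine lt_of_mul_lt_mul_left (a := d ^ 2) ?_ (sq_nonneg d)
    calc d ^ 2 * cauchyDensity t θ
      _ ≤ θ.im := sq_mul_cauchyDensity_le_im hd.le hθ ht
      _ < 1 / M := him
      _ ≤ d ^ 2 * ε := by
          rw [one_div]
          exact inv_le_of_inv_le₀ (by positivity) hM_sq

end cauchyDensity

section cauchyL

variable {n : ℕ} {x : Fin n → ℝ}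

theorem cauchyL_pos {θ : ℂ} (hθ : 0 < θ.im) : 0 < cauchyL x θ :=
  prod_pos fun _ _ ↦ cauchyDensity_pos hθ

theorem continuousOn_cauchyL : ContinuousOn (cauchyL x) {θ | 0 < θ.im} := by
  refine continuousOn_finsetProd _ fun j _ ↦ ContinuousOn.div (by fun_prop) (by fun_prop) ?_
  intro θ (hθ : 0 < θ.im)
  positivity

theorem exists_cauchyL_le_mul_cauchyDensity (hx : ∀ v, 2 * #{j | x j = v} < n) :
    ∃ d C : ℝ, 0 < d ∧ 0 < C ∧ ∀ θ : ℂ, 0 < θ.im →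
      ∃ k, d ≤ |x k - θ.re| ∧ cauchyL x θ ≤ C * cauchyDensity (x k) θ := by
  obtain ⟨r, hr, hsep⟩ := exists_pos_forall_lt_dist_of_ne x
  set d := r / 2 with hd_def
  have hd : 0 < d := half_pos hr
  refine ⟨d, d / d ^ n, hd, by positivity, fun θ hθ ↦ ?_⟩
  let near : Finset (Fin n) := {j | |x j - θ.re| < d}
  have near_subset : ∃ v, near ⊆ ({j | x j = v} : Finset (Fin n)) := by
    rcases near.eq_empty_or_nonempty with h | ⟨i, hi⟩
    · exact ⟨0, h ▸ empty_subset _⟩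
    · refine ⟨x i, fun j hj ↦ ?_⟩
      simp only [near, mem_filter_univ, ← Real.dist_eq] at hi hj ⊢
      by_contra hji
      linarith [hsep j i hji, dist_triangle_right (x j) (x i) θ.re]
  have card_near : 2 * #near < Fintype.card (Fin n) := by
    obtain ⟨v, hv⟩ := near_subset
    rw [Fintype.card_fin]
    linarith [hx v, card_le_card hv]
  obtain ⟨k, hk, hprod⟩ := exists_notMem_prod_le_of_two_mul_card_lt (div_pos hθ hd) card_near
    (fun j ↦ (mul_pos hd (cauchyDensity_pos (t := x j) hθ)).le)
    (fun j _ ↦ mul_cauchyDensity_le_inv hd.le hθ)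
    (fun j hj ↦ mul_cauchyDensity_le_min hd hθ (by simpa [near] using hj))
  refine ⟨k, by simpa [near] using hk, ?_⟩
  have pow_mul_le : d ^ n * cauchyL x θ ≤ d * cauchyDensity (x k) θ := by
    rwa [prod_mul_distrib, prod_const, card_univ, Fintype.card_fin] at hprod
  rwa [div_mul_eq_mul_div, le_div_iff₀' (by positivity)]

theorem eventually_cauchyL_lt (hx : ∀ v, 2 * #{j | x j = v} < n) {ε : ℝ} (hε : 0 < ε) :
    ∀ᶠ M in atTop, ∀ θ : ℂ, 0 < θ.im → θ ∉ halfPlaneBox M → cauchyL x θ < ε := by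
  obtain ⟨d, C, hd, hC, hbound⟩ := exists_cauchyL_le_mul_cauchyDensity hx
  filter_upwards [eventually_all.2 fun j ↦ eventually_cauchyDensity_lt (x j) hd (div_pos hε hC)]
    with M hM θ hθ hbox
  obtain ⟨k, hk, hle⟩ := hbound θ hθ
  exact hle.trans_lt ((lt_div_iff₀' hC).1 (hM k θ hθ hk hbox))

theorem exists_forall_cauchyL_le (hx : ∀ v, 2 * #{j | x j = v} < n) :
    ∃ θ₀ : ℂ, 0 < θ₀.im ∧ ∀ θ : ℂ, 0 < θ.im → cauchyL x θ ≤ cauchyL x θ₀ := by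
  have hI : 0 < I.im := by simp
  obtain ⟨M, hM, hlt⟩ :=
    ((eventually_gt_atTop 0).and (eventually_cauchyL_lt hx (cauchyL_pos hI))).exists
  have box_subset : halfPlaneBox M ⊆ {θ | 0 < θ.im} := fun _ ↦ im_pos_of_mem_halfPlaneBox hM
  obtain ⟨θ₀, hθ₀, hmax⟩ := exists_forall_le_of_forall_notMem_isCompact_lt
    (isCompact_halfPlaneBox M) (continuousOn_cauchyL.mono box_subset) hI hlt
  exact ⟨θ₀, box_subset hθ₀, hmax⟩

end cauchyL

theorem stmt_5_general (n : ℕ) (x : Fin n → ℝ) (hx : ∀ v, 2 * #{j | x j = v} < n) :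
    (∀ ε : ℝ, 0 < ε → ∃ M : ℝ, 0 < M ∧
      ∀ θ : ℂ, 0 < θ.im → (M < |θ.re| ∨ M < θ.im ∨ θ.im < 1 / M) →
        cauchyL x θ < ε) ∧
    ∃ θ₀ : ℂ, 0 < θ₀.im ∧ ∀ θ : ℂ, 0 < θ.im → cauchyL x θ ≤ cauchyL x θ₀ := by
  refine ⟨fun ε hε ↦ ?_, exists_forall_cauchyL_le hx⟩
  simp only [← notMem_halfPlaneBox_iff]
  exact ((eventually_gt_atTop 0).and (eventually_cauchyL_lt hx hε)).exists

theorem stmt_5 (n : ℕ) (hn : 3 ≤ n) (x : Fin n → ℝ) (hx : Function.Injective x) :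
    (∀ ε : ℝ, 0 < ε → ∃ M : ℝ, 0 < M ∧
      ∀ θ : ℂ, 0 < θ.im → (M < |θ.re| ∨ M < θ.im ∨ θ.im < 1 / M) →
        cauchyL x θ < ε) ∧
    ∃ θ₀ : ℂ, 0 < θ₀.im ∧ ∀ θ : ℂ, 0 < θ.im → cauchyL x θ ≤ cauchyL x θ₀ :=
  stmt_5_general n x (two_mul_card_fiber_lt_of_injective hn hx)
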